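/- Let C be a regular, irreducible curve that is projective over a field k, with function field F = k(C), arithmetic genus t, and a k-rational point O. For every integer d ≥ 3t + 1, the tame symbol T : K₂(F) → ∐_{P ∈ C} k(P)^* and its restriction F_{d−1} → ∐_{P ∈ {O} ∪ C_{≤ d−1}} k(P)^* have the same kernel, and their cokernels are isomorphic. -/

import Mathlib

open scoped TensorProduct

noncomputable section

/-- The set of Steinberg relations in `Fˣ ⊗_ℤ Fˣ` (written additively):
the elements `a ⊗ b` with `a + b = 1` in `F`. -/
def SteinbergSet (F : Type*) [Field F] :
    Set (TensorProduct ℤ (Additive Fˣ) (Additive Fˣ)) :=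
  { x | ∃ a b : Fˣ, (a : F) + (b : F) = 1 ∧
      x = Additive.ofMul a ⊗ₜ[ℤ] Additive.ofMul b }

/-- Milnor's `K₂` of a field, via Matsumoto's presentation. -/
abbrev K2 (F : Type*) [Field F] :=
  (TensorProduct ℤ (Additive Fˣ) (Additive Fˣ)) ⧸
    Submodule.span ℤ (SteinbergSet F)

/-- The symbol `{f, g}` in `K₂(F)`. -/
def symbol {F : Type*} [Field F] (f g : Fˣ) : K2 F :=
  Submodule.Quotient.mk (Additive.ofMul f ⊗ₜ[ℤ] Additive.ofMul g)

/-- The degree of a divisor `D` on the curve: `∑_P deg(P) · D(P)`,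
where `deg P = [k(P) : k]`. -/
def divDeg (k : Type*) [Field k] {Pt : Type*} (res : Pt → Type*)
    [∀ P, Field (res P)] [∀ P, Algebra k (res P)] (D : Pt →₀ ℤ) : ℤ :=
  ∑ᶠ P, (Module.finrank k (res P) : ℤ) * D P

/-- Axioms for a regular, irreducible curve `C`, projective over a field `k`, with
`H⁰(C, O_C) = k`, presented through: its function field `F = k(C)`, its set `Pt` of
closed points, the residue fields `res P = k(P)`, the normalized valuations `ord P`,
the evaluation maps `ev P` (evaluation at `P` of functions regular at `P`), the
Riemann-Roch spaces `L D = H⁰(C, O_C(D))`, and the arithmetic genus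
`t = dim_k H¹(C, O_C)`, characterized by the Riemann-Roch relations. -/
structure IsProjCurve (k F : Type*) [Field k] [Field F] [Algebra k F]
    {Pt : Type*} (res : Pt → Type*) [∀ P, Field (res P)] [∀ P, Algebra k (res P)]
    (ord : Pt → F → ℤ) (ev : ∀ P, F → res P)
    (L : (Pt →₀ ℤ) → Submodule k F) (t : ℕ) : Prop where
  finiteDimensional_res : ∀ P, FiniteDimensional k (res P)
  ord_mul : ∀ P (f g : F), f ≠ 0 → g ≠ 0 → ord P (f * g) = ord P f + ord P g
  ord_add : ∀ P (f g : F), f ≠ 0 → g ≠ 0 → f + g ≠ 0 →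
      min (ord P f) (ord P g) ≤ ord P (f + g)
  ord_algebraMap : ∀ P (c : k), c ≠ 0 → ord P (algebraMap k F c) = 0
  ord_uniformizer : ∀ P, ∃ f : F, f ≠ 0 ∧ ord P f = 1
  ord_separates : ∀ P Q, (∀ f : F, ord P f = ord Q f) → P = Q
  support_finite : ∀ f : F, f ≠ 0 → {P | ord P f ≠ 0}.Finite
  degree_formula : ∀ f : F, f ≠ 0 →
      ∑ᶠ P, (Module.finrank k (res P) : ℤ) * ord P f = 0
  ev_zero : ∀ P, ev P 0 = 0
  ev_one : ∀ P, ev P 1 = 1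
  ev_add : ∀ P (f g : F), f ≠ 0 → g ≠ 0 → 0 ≤ ord P f → 0 ≤ ord P g →
      ev P (f + g) = ev P f + ev P g
  ev_mul : ∀ P (f g : F), f ≠ 0 → g ≠ 0 → 0 ≤ ord P f → 0 ≤ ord P g →
      ev P (f * g) = ev P f * ev P g
  ev_algebraMap : ∀ P (c : k), ev P (algebraMap k F c) = algebraMap k (res P) c
  ev_eq_zero_iff : ∀ P (f : F), f ≠ 0 → 0 ≤ ord P f → (ev P f = 0 ↔ 0 < ord P f)
  ev_surjective : ∀ P (y : res P), ∃ f : F, f ≠ 0 ∧ 0 ≤ ord P f ∧ ev P f = y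
  mem_L : ∀ (D : Pt →₀ ℤ) (f : F), f ∈ L D ↔ (f ≠ 0 → ∀ P, 0 ≤ D P + ord P f)
  finiteDimensional_L : ∀ D, FiniteDimensional k (L D)
  global_sections : ∀ f : F, f ∈ L 0 ↔ ∃ c : k, algebraMap k F c = f
  rr_ineq : ∀ D : Pt →₀ ℤ,
      divDeg k res D + 1 - t ≤ (Module.finrank k (L D) : ℤ)
  rr_eq : ∀ D : Pt →₀ ℤ, 2 * (t : ℤ) - 2 < divDeg k res D →
      (Module.finrank k (L D) : ℤ) = divDeg k res D + 1 - t

/-- `T` is the tame symbol `K₂(F) → ∐_{P} k(P)^*`: it is determined by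
`T_P({f,g}) = (-1)^{ord_P(f)·ord_P(g)} (f^{ord_P(g)} / g^{ord_P(f)})(P)`. -/
def IsTameSymbol {F : Type*} [Field F] {Pt : Type*} {res : Pt → Type*}
    [∀ P, Field (res P)]
    (ord : Pt → F → ℤ) (ev : ∀ P, F → res P)
    (T : K2 F →+ Π₀ P : Pt, Additive ((res P)ˣ)) : Prop :=
  ∀ (f g : Fˣ) (P : Pt),
    ((Additive.toMul (T (symbol f g) P) : (res P)ˣ) : res P) =
      ev P (((-1 : Fˣ) ^ (ord P (f : F) * ord P (g : F)) *
        f ^ (ord P (g : F)) * g ^ (-ord P (f : F)) : Fˣ) : F)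

/-- `F_d`: the subgroup of `K₂(F)` generated by the symbols `{f, g}` with
`|(f)| ∪ |(g)| ⊆ C_{≤ d}`. -/
def Fsub (k : Type*) [Field k] {F : Type*} [Field F] {Pt : Type*} (res : Pt → Type*)
    [∀ P, Field (res P)] [∀ P, Algebra k (res P)]
    (ord : Pt → F → ℤ) (d : ℕ) : AddSubgroup (K2 F) :=
  AddSubgroup.closure
    { x | ∃ f g : Fˣ,
        (∀ P, ord P (f : F) ≠ 0 → Module.finrank k (res P) ≤ d) ∧
        (∀ P, ord P (g : F) ≠ 0 → Module.finrank k (res P) ≤ d) ∧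
        x = symbol f g }

section Symbols

variable {F : Type*} [Field F]

lemma symbol_mul_left (a b c : Fˣ) : symbol (a * b) c = symbol a c + symbol b c := by
  simp [symbol, TensorProduct.add_tmul]

lemma symbol_mul_right (a b c : Fˣ) : symbol a (b * c) = symbol a b + symbol a c := by
  simp [symbol, TensorProduct.tmul_add]

lemma symbol_one_left (c : Fˣ) : symbol 1 c = 0 := by
  simp [symbol]

lemma symbol_one_right (c : Fˣ) : symbol c 1 = 0 := by
  simp [symbol]

lemma symbol_inv_left (a c : Fˣ) : symbol a⁻¹ c = -symbol a c := by
  rw [eq_neg_iff_add_eq_zero, ← symbol_mul_left, inv_mul_cancel, symbol_one_left]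

lemma symbol_inv_right (a c : Fˣ) : symbol a c⁻¹ = -symbol a c := by
  rw [eq_neg_iff_add_eq_zero, ← symbol_mul_right, inv_mul_cancel, symbol_one_right]

lemma symbol_div_left (a b c : Fˣ) : symbol (a / b) c = symbol a c - symbol b c := by
  rw [div_eq_mul_inv, symbol_mul_left, symbol_inv_left, sub_eq_add_neg]

lemma symbol_eq_zero_of_add_eq_one {a b : Fˣ} (h : (a : F) + b = 1) : symbol a b = 0 :=
  (Submodule.Quotient.mk_eq_zero _).2 (Submodule.subset_span ⟨a, b, h, rfl⟩)

lemma symbol_neg_self (a : Fˣ) : symbol a (-a) = 0 := by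
  by_cases ha : a = 1
  · rw [ha, symbol_one_left]
  have ha' : (a : F) ≠ 1 := fun h => ha (Units.ext h)
  have h₁ : (1 : F) - a ≠ 0 := sub_ne_zero.2 ha'.symm
  have h₂ : (1 : F) - (a : F)⁻¹ ≠ 0 := sub_ne_zero.2 fun h => ha' (by
    rw [← inv_inv (a : F), ← h, inv_one])
  have e₁ : symbol a (Units.mk0 _ h₁) = 0 := symbol_eq_zero_of_add_eq_one (by simp)
  have e₂ : symbol a⁻¹ (Units.mk0 _ h₂) = 0 := symbol_eq_zero_of_add_eq_one (by simp)
  have h : -a = Units.mk0 _ h₁ * (Units.mk0 _ h₂)⁻¹ := by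
    rw [eq_mul_inv_iff_mul_eq]
    ext
    have := a.ne_zero
    simp
    field_simp
    ring
  rw [symbol_inv_left, neg_eq_zero] at e₂
  rw [h, symbol_mul_right, symbol_inv_right, e₁, e₂, neg_zero, add_zero]

lemma symbol_swap (a b : Fˣ) : symbol a b = -symbol b a := by
  have h := symbol_neg_self (a * b)
  have h₁ : symbol a (-(a * b)) = symbol a b := by
    rw [← neg_mul, symbol_mul_right, symbol_neg_self, zero_add]
  have h₂ : symbol b (-(a * b)) = symbol b a := by
    rw [← mul_neg, symbol_mul_right, symbol_neg_self, add_zero]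
  rw [symbol_mul_left, h₁, h₂] at h
  exact eq_neg_of_add_eq_zero_left h

lemma symbol_self (a : Fˣ) : symbol a a = symbol (-1) a := by
  have h := symbol_neg_self a
  rw [← neg_one_mul, symbol_mul_right] at h
  rw [symbol_swap (-1) a]
  exact eq_neg_of_add_eq_zero_right h

lemma symbol_mem_of_mem_closure {N : AddSubgroup (K2 F)} {S : Set Fˣ}
    (h : ∀ a ∈ S, ∀ b ∈ S, symbol a b ∈ N) {a b : Fˣ} (ha : a ∈ Subgroup.closure S)
    (hb : b ∈ Subgroup.closure S) : symbol a b ∈ N := by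
  induction ha using Subgroup.closure_induction with
  | one => rw [symbol_one_left]; exact N.zero_mem
  | mul x y _ _ hx hy => rw [symbol_mul_left]; exact N.add_mem hx hy
  | inv x _ hx => rw [symbol_inv_left]; exact N.neg_mem hx
  | mem x hx =>
    induction hb using Subgroup.closure_induction with
    | one => rw [symbol_one_right]; exact N.zero_mem
    | mul y z _ _ hy hz => rw [symbol_mul_right]; exact N.add_mem hy hz
    | inv y _ hy => rw [symbol_inv_right]; exact N.neg_mem hy
    | mem y hy => exact h x hx y hy

lemma K2_induction {N : AddSubgroup (K2 F)} (h : ∀ a b : Fˣ, symbol a b ∈ N) (x : K2 F) :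
    x ∈ N := by
  obtain ⟨y, rfl⟩ := Submodule.Quotient.mk_surjective _ x
  induction y using TensorProduct.induction_on with
  | zero => exact N.zero_mem
  | tmul a b => exact h a.toMul b.toMul
  | add y z hy hz => rw [Submodule.Quotient.mk_add]; exact N.add_mem hy hz

end Symbols

section Dimension

variable {k M : Type*} [Field k] [AddCommGroup M] [Module k M]

lemma finrank_add_le_finrank_inf_add [FiniteDimensional k M] (V W : Submodule k M) :
    Module.finrank k V + Module.finrank k W ≤
      Module.finrank k (V ⊓ W : Submodule k M) + Module.finrank k M := by
  have h := Submodule.finrank_sup_add_finrank_inf_eq V W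
  have h' := Submodule.finrank_le (V ⊔ W)
  omega

lemma exists_ne_zero_of_finrank_pos {V : Submodule k M} (h : 0 < Module.finrank k V) :
    ∃ x ∈ V, x ≠ 0 := by
  have : V ≠ ⊥ := by
    rintro rfl
    simp at h
  exact V.exists_mem_ne_zero_of_ne_bot this

lemma finrank_map_mulLeft {K : Type*} [Field K] [Algebra k K] {a : K}
    (ha : a ≠ 0) (V : Submodule k K) :
    Module.finrank k (V.map (LinearMap.mulLeft k a)) = Module.finrank k V :=
  (Submodule.equivMapOfInjective _ (mul_right_injective₀ ha) V).finrank_eq.symm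

end Dimension

section Degree

variable {k : Type*} [Field k] {Pt : Type*} {res : Pt → Type*}
  [∀ P, Field (res P)] [∀ P, Algebra k (res P)]

lemma divDeg_eq_sum (D : Pt →₀ ℤ) :
    divDeg k res D = D.sum fun P n => (Module.finrank k (res P) : ℤ) * n := by
  unfold divDeg Finsupp.sum
  apply finsum_eq_sum_of_support_subset
  intro P hP
  simp only [Function.mem_support, ne_eq, mul_eq_zero, not_or] at hP
  simpa using hP.2

lemma divDeg_zero : divDeg k res (0 : Pt →₀ ℤ) = 0 := by
  simp [divDeg_eq_sum]

lemma divDeg_add (D E : Pt →₀ ℤ) : divDeg k res (D + E) = divDeg k res D + divDeg k res E := by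
  simp only [divDeg_eq_sum]
  exact Finsupp.sum_add_index' (by simp) (by intros; ring)

lemma divDeg_single (P : Pt) (n : ℤ) :
    divDeg k res (Finsupp.single P n) = Module.finrank k (res P) * n := by
  rw [divDeg_eq_sum, Finsupp.sum_single_index (by simp)]

lemma divDeg_sub (D E : Pt →₀ ℤ) : divDeg k res (D - E) = divDeg k res D - divDeg k res E := by
  have h := divDeg_add (k := k) (res := res) (D - E) E
  rw [sub_add_cancel] at h
  linarith

lemma divDeg_nonneg {D : Pt →₀ ℤ} (hD : 0 ≤ D) : 0 ≤ divDeg k res D := by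
  rw [divDeg_eq_sum]
  exact Finset.sum_nonneg fun P _ => mul_nonneg (by positivity) (hD P)

/-- A point in the support of an effective divisor has degree at most that of the divisor. -/
lemma finrank_le_divDeg {D : Pt →₀ ℤ} (hD : 0 ≤ D) {P : Pt} (hP : D P ≠ 0) :
    (Module.finrank k (res P) : ℤ) ≤ divDeg k res D := by
  classical
  have h : 0 ≤ D - Finsupp.single P 1 := by
    intro Q
    have hQ := hD Q
    by_cases hQP : Q = P
    · subst hQP
      simp only [Finsupp.coe_zero, Pi.zero_apply, Finsupp.coe_sub, Pi.sub_apply,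
        Finsupp.single_eq_same] at hQ ⊢
      omega
    · simpa [Finsupp.single_eq_of_ne hQP] using hQ
  have := divDeg_nonneg (k := k) (res := res) h
  rw [divDeg_sub, divDeg_single] at this
  linarith

lemma Fsub_mono {F : Type*} [Field F] {ord : Pt → F → ℤ} {m n : ℕ} (h : m ≤ n) :
    Fsub k res ord m ≤ Fsub k res ord n := by
  apply AddSubgroup.closure_mono
  rintro _ ⟨f, g, hf, hg, rfl⟩
  exact ⟨f, g, fun P hP => (hf P hP).trans h, fun P hP => (hg P hP).trans h, rfl⟩

end Degree

lemma IsTameSymbol.apply_symbol {F : Type*} [Field F] {Pt : Type*} {res : Pt → Type*}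
    [∀ P, Field (res P)] {ord : Pt → F → ℤ} {ev : ∀ P, F → res P}
    {T : K2 F →+ Π₀ P : Pt, Additive ((res P)ˣ)} (hT : IsTameSymbol ord ev T) {f g : Fˣ} {P : Pt}
    (hf : ord P (f : F) = 0) (hg : ord P (g : F) = 1) :
    ((Additive.toMul (T (symbol f g) P) : (res P)ˣ) : res P) = ev P (f : F) := by
  rw [hT f g P, hf, hg]
  simp

namespace IsProjCurve

variable {k F : Type*} [Field k] [Field F] [Algebra k F] {Pt : Type*} {res : Pt → Type*}
  [∀ P, Field (res P)] [∀ P, Algebra k (res P)] {ord : Pt → F → ℤ} {ev : ∀ P, F → res P}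
  {L : (Pt →₀ ℤ) → Submodule k F} {t : ℕ} (hC : IsProjCurve k F res ord ev L t)

lemma ord_units_mul (hC : IsProjCurve k F res ord ev L t) (P : Pt) (f g : Fˣ) :
    ord P ((f * g : Fˣ) : F) = ord P (f : F) + ord P (g : F) :=
  hC.ord_mul P f g f.ne_zero g.ne_zero

lemma ord_units_one (hC : IsProjCurve k F res ord ev L t) (P : Pt) :
    ord P ((1 : Fˣ) : F) = 0 := by
  have := hC.ord_units_mul P 1 1
  rw [mul_one] at this
  linarith

lemma ord_units_inv (hC : IsProjCurve k F res ord ev L t) (P : Pt) (f : Fˣ) :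
    ord P ((f⁻¹ : Fˣ) : F) = -ord P (f : F) := by
  have := hC.ord_units_mul P f⁻¹ f
  rw [inv_mul_cancel, hC.ord_units_one] at this
  linarith

lemma ord_units_div (hC : IsProjCurve k F res ord ev L t) (P : Pt) (f g : Fˣ) :
    ord P ((f / g : Fˣ) : F) = ord P (f : F) - ord P (g : F) := by
  rw [div_eq_mul_inv, hC.ord_units_mul, hC.ord_units_inv, sub_eq_add_neg]

lemma ord_units_zpow (hC : IsProjCurve k F res ord ev L t) (P : Pt) (f : Fˣ)
    (n : ℤ) :
    ord P ((f ^ n : Fˣ) : F) = n * ord P (f : F) := by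
  induction n with
  | zero => simpa using hC.ord_units_one P
  | succ n ih => rw [zpow_add_one, hC.ord_units_mul, ih]; ring
  | pred n ih => rw [zpow_sub_one, hC.ord_units_mul, hC.ord_units_inv, ih]; ring

lemma ord_units_neg_one (hC : IsProjCurve k F res ord ev L t) (P : Pt) :
    ord P ((-1 : Fˣ) : F) = 0 := by
  simpa using hC.ord_algebraMap P (-1) (by simp)

/-- The divisor of a nonzero function. -/
def div (f : Fˣ) : Pt →₀ ℤ :=
  Finsupp.ofSupportFinite (fun P => ord P (f : F)) (hC.support_finite f f.ne_zero)

@[simp] lemma div_apply (f : Fˣ) (P : Pt) : hC.div f P = ord P (f : F) := rfl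

lemma div_mul (f g : Fˣ) : hC.div (f * g) = hC.div f + hC.div g := by
  ext P
  exact hC.ord_units_mul P f g

lemma div_one : hC.div 1 = 0 := by
  ext P
  exact hC.ord_units_one P

lemma div_inv (f : Fˣ) : hC.div f⁻¹ = -hC.div f := by
  ext P
  exact hC.ord_units_inv P f

lemma divDeg_div (f : Fˣ) : divDeg k res (hC.div f) = 0 :=
  hC.degree_formula f f.ne_zero

lemma finrank_pos (hC : IsProjCurve k F res ord ev L t) (P : Pt) :
    0 < Module.finrank k (res P) :=
  haveI := hC.finiteDimensional_res P
  Module.finrank_pos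

lemma mem_L_iff (f : Fˣ) (D : Pt →₀ ℤ) : (f : F) ∈ L D ↔ 0 ≤ D + hC.div f := by
  rw [hC.mem_L]
  exact ⟨fun h P => h f.ne_zero P, fun h _ P => h P⟩

lemma mem_L_single_mono (hC : IsProjCurve k F res ord ev L t) {O : Pt} {m n : ℤ} (h : m ≤ n)
    {f : F} (hf : f ∈ L (Finsupp.single O m)) : f ∈ L (Finsupp.single O n) := by
  rw [hC.mem_L] at hf ⊢
  intro h0 P
  have := hf h0 P
  have h' : Finsupp.single O m P ≤ Finsupp.single O n P := Finsupp.single_le_single.2 h P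
  linarith

lemma mul_mem_L_single (hC : IsProjCurve k F res ord ev L t) {O : Pt} {m n : ℤ}
    {f g : F} (hf : f ∈ L (Finsupp.single O m)) (hg : g ∈ L (Finsupp.single O n)) :
    f * g ∈ L (Finsupp.single O (m + n)) := by
  rw [hC.mem_L] at hf hg ⊢
  intro h0 P
  rw [mul_ne_zero_iff] at h0
  rw [hC.ord_mul P f g h0.1 h0.2, Finsupp.single_add, Finsupp.add_apply]
  have := hf h0.1 P
  have := hg h0.2 P
  linarith

lemma ord_nonneg_of_mem_L_single (hC : IsProjCurve k F res ord ev L t) {O P : Pt} (hP : P ≠ O)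
    {m : ℤ} {f : F} (hf : f ∈ L (Finsupp.single O m)) (h0 : f ≠ 0) : 0 ≤ ord P f := by
  simpa [Finsupp.single_eq_of_ne hP] using (hC.mem_L _ _).1 hf h0 P

/-- Every divisor `A` can be moved, by adding an effective divisor of degree `t`, to a
principal divisor up to a multiple of a rational point `O`. -/
lemma exists_div_eq {O : Pt} (hO : Module.finrank k (res O) = 1) (A : Pt →₀ ℤ) :
    ∃ (f : Fˣ) (E : Pt →₀ ℤ), 0 ≤ E ∧ divDeg k res E = t ∧
      hC.div f = A + E - Finsupp.single O (divDeg k res A + t) := by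
  set D := Finsupp.single O (divDeg k res A + t) - A with hD
  have hdeg : divDeg k res D = t := by
    rw [hD, divDeg_sub, divDeg_single, hO]
    push_cast
    ring
  have hpos : 0 < Module.finrank k (L D) := by
    have := hC.rr_ineq D
    rw [hdeg] at this
    omega
  obtain ⟨f, hf, hf0⟩ := exists_ne_zero_of_finrank_pos hpos
  refine ⟨Units.mk0 f hf0, D + hC.div (Units.mk0 f hf0), (hC.mem_L_iff _ _).1 hf, ?_, ?_⟩
  · rw [divDeg_add, hdeg, hC.divDeg_div, add_zero]
  · rw [hD]
    abel

/-- The group of nonzero functions whose divisor is supported on `O` and on points of degree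
at most `n`. -/
def suppLE (O : Pt) (n : ℕ) : Subgroup Fˣ where
  carrier := {f | ∀ P, ord P (f : F) ≠ 0 → P = O ∨ Module.finrank k (res P) ≤ n}
  mul_mem' {f g} hf hg P hP := by
    rw [hC.ord_units_mul] at hP
    by_cases h : ord P (f : F) = 0
    · exact hg P (by omega)
    · exact hf P h
  one_mem' P hP := absurd (hC.ord_units_one P) hP
  inv_mem' {f} hf P hP := by
    rw [hC.ord_units_inv, neg_ne_zero] at hP
    exact hf P hP

lemma mem_suppLE {O : Pt} {n : ℕ} {f : Fˣ} : f ∈ hC.suppLE O n ↔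
    ∀ P, ord P (f : F) ≠ 0 → P = O ∨ Module.finrank k (res P) ≤ n := Iff.rfl

lemma ord_eq_zero_of_mem_suppLE {O : Pt} {n : ℕ} {f : Fˣ} (hf : f ∈ hC.suppLE O n) {P : Pt}
    (hP : P ≠ O) (hn : n < Module.finrank k (res P)) : ord P (f : F) = 0 := by
  by_contra h
  rcases hf P h with h | h
  · exact hP h
  · omega

lemma neg_one_mem_suppLE (O : Pt) (n : ℕ) : (-1 : Fˣ) ∈ hC.suppLE O n :=
  fun P hP => absurd (hC.ord_units_neg_one P) hP

lemma mem_suppLE_of_mem_L {O : Pt} (hO : Module.finrank k (res O) = 1) {n : ℕ} {m : ℤ}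
    (hm : m ≤ n) {f : Fˣ} (hf : (f : F) ∈ L (Finsupp.single O m)) : f ∈ hC.suppLE O n := by
  intro P hP
  by_cases hPO : P = O
  · exact Or.inl hPO
  right
  have h := finrank_le_divDeg (k := k) (res := res) ((hC.mem_L_iff _ _).1 hf) (P := P)
    (by simpa [Finsupp.single_eq_of_ne hPO] using hP)
  rw [divDeg_add, divDeg_single, hC.divDeg_div, hO] at h
  push_cast at h
  omega

/-- A function with a zero at a point `P` of degree larger than the order of its only pole `O`
does not exist. -/
lemma ord_eq_zero_of_mem_L (hC : IsProjCurve k F res ord ev L t) {O : Pt}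
    (hO : Module.finrank k (res O) = 1) {P : Pt} (hP : P ≠ O) {m : ℕ}
    (hm : m < Module.finrank k (res P)) {f : Fˣ}
    (hf : (f : F) ∈ L (Finsupp.single O (m : ℤ))) : ord P (f : F) = 0 :=
  hC.ord_eq_zero_of_mem_suppLE (hC.mem_suppLE_of_mem_L hO le_rfl hf) hP hm

lemma symbol_mem_Fsub {O : Pt} (hO : Module.finrank k (res O) = 1) {n : ℕ} {f g : Fˣ}
    (hf : f ∈ hC.suppLE O n) (hg : g ∈ hC.suppLE O n) : symbol f g ∈ Fsub k res ord n := by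
  have key : ∀ f ∈ hC.suppLE O n, ∀ P, ord P (f : F) ≠ 0 → Module.finrank k (res P) ≤ n := by
    intro f hf P hP
    rcases hf P hP with h | h
    · subst h
      rw [hO]
      by_contra hn
      have hdiv : hC.div f = Finsupp.single P (ord P (f : F)) := by
        ext Q
        by_cases hQ : Q = P
        · subst hQ
          simp
        · rw [Finsupp.single_eq_of_ne hQ]
          exact hC.ord_eq_zero_of_mem_suppLE hf hQ (by have := hC.finrank_pos Q; omega)
      have := hC.divDeg_div f
      rw [hdiv, divDeg_single, hO] at this
      simp at this
      exact hP this
    · exact h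
  exact AddSubgroup.subset_closure ⟨f, g, key f hf, key g hg, rfl⟩

/-- The functions supported on `O` and on points of degree at most `n` are generated by those
regular outside `O` with a pole of bounded order. -/
lemma suppLE_le_closure {O : Pt} (hO : Module.finrank k (res O) = 1) {n : ℕ} (hn : 3 * t ≤ n) :
    hC.suppLE O n ≤ Subgroup.closure
      {f : Fˣ | f ∈ hC.suppLE O n ∧ (f : F) ∈ L (Finsupp.single O ((n + t : ℕ) : ℤ))} := by
  classical
  set G := Subgroup.closure
      {f : Fˣ | f ∈ hC.suppLE O n ∧ (f : F) ∈ L (Finsupp.single O ((n + t : ℕ) : ℤ))}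
  have hGle : G ≤ hC.suppLE O n := (Subgroup.closure_le _).2 fun f hf => hf.1
  have move : ∀ A : Pt →₀ ℤ, 0 ≤ A → divDeg k res A ≤ n →
      ∃ f ∈ G, ∃ E : Pt →₀ ℤ, 0 ≤ E ∧ divDeg k res E = t ∧
        hC.div f = A + E - Finsupp.single O (divDeg k res A + t) := by
    intro A hA hdeg
    obtain ⟨f, E, hE, hEdeg, hf⟩ := hC.exists_div_eq hO A
    refine ⟨f, Subgroup.subset_closure ⟨fun P hP => ?_, ?_⟩, E, hE, hEdeg, hf⟩
    · by_cases hPO : P = O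
      · exact Or.inl hPO
      right
      rw [← hC.div_apply, hf, Finsupp.sub_apply, Finsupp.single_eq_of_ne hPO, sub_zero,
        Finsupp.add_apply] at hP
      by_cases h : A P = 0
      · have := finrank_le_divDeg (k := k) (res := res) hE (P := P) (by omega)
        omega
      · have := finrank_le_divDeg (k := k) (res := res) hA h
        omega
    · refine hC.mem_L_single_mono (m := divDeg k res A + t) (by push_cast; omega) ?_
      rw [hC.mem_L_iff, hf, add_sub_cancel]
      exact add_nonneg hA hE
  have neg : ∀ A E : Pt →₀ ℤ, ∀ f ∈ G, ∀ j : ℤ, 0 ≤ E → divDeg k res E ≤ 2 * t →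
      hC.div f = A - E + Finsupp.single O j →
      ∃ f ∈ G, ∃ E : Pt →₀ ℤ, 0 ≤ E ∧ divDeg k res E ≤ t ∧
        ∃ j : ℤ, hC.div f = -A - E + Finsupp.single O j := by
    intro A E f hf j hE hdeg hdiv
    obtain ⟨g, hg, E', hE', hdeg', hdivg⟩ := move E hE (by omega)
    refine ⟨(f * g)⁻¹, G.inv_mem (G.mul_mem hf hg), E', hE', hdeg'.le,
      divDeg k res E + t - j, ?_⟩
    rw [hC.div_inv, hC.div_mul, hdiv, hdivg, Finsupp.single_sub]
    abel
  let X : AddSubgroup (Pt →₀ ℤ) :=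
    { carrier := {A | ∃ f ∈ G, ∃ E : Pt →₀ ℤ, 0 ≤ E ∧ divDeg k res E ≤ t ∧
        ∃ j : ℤ, hC.div f = A - E + Finsupp.single O j}
      zero_mem' := ⟨1, G.one_mem, 0, le_rfl, by simp [divDeg_zero], 0, by simp [hC.div_one]⟩
      neg_mem' := by
        rintro A ⟨f, hf, E, hE, hdeg, j, hdiv⟩
        exact neg A E f hf j hE (by omega) hdiv
      add_mem' := by
        rintro A B ⟨f, hf, E, hE, hdeg, j, hdiv⟩ ⟨f', hf', E', hE', hdeg', j', hdiv'⟩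
        obtain ⟨g, hg, E₁, hE₁, hdeg₁, j₁, hdiv₁⟩ := neg (A + B) (E + E') (f * f')
          (G.mul_mem hf hf') (j + j') (add_nonneg hE hE') (by rw [divDeg_add]; omega)
          (by rw [hC.div_mul, hdiv, hdiv', Finsupp.single_add]; abel)
        simpa using neg (-(A + B)) E₁ g hg j₁ hE₁ (by omega) hdiv₁ }
  have hX : ∀ Q, (Q = O ∨ Module.finrank k (res Q) ≤ n) → ∀ m : ℤ, Finsupp.single Q m ∈ X := by
    intro Q hQ m
    have h1 : Finsupp.single Q (1 : ℤ) ∈ X := by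
      by_cases hQO : Q = O
      · subst hQO
        exact ⟨1, G.one_mem, 0, le_rfl, by simp [divDeg_zero], -1, by simp [hC.div_one]⟩
      · obtain ⟨f, hf, E, hE, hdeg, hdiv⟩ := move (Finsupp.single Q 1) (by simp)
          (by rw [divDeg_single]; have := hQ.resolve_left hQO; omega)
        rw [← X.neg_mem_iff]
        refine ⟨f⁻¹, G.inv_mem hf, E, hE, hdeg.le,
          divDeg k res (Finsupp.single Q 1) + t, ?_⟩
        rw [hC.div_inv, hdiv]
        abel
    simpa using X.zsmul_mem h1 m
  intro u hu
  obtain ⟨f, hf, E, hE, hdeg, j, hdiv⟩ : hC.div u ∈ X := by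
    rw [← (hC.div u).sum_single]
    exact X.sum_mem fun P hP => hX P (hu P (by simpa using hP)) _
  have hdivu : hC.div (u * f⁻¹) = E - Finsupp.single O j := by
    rw [hC.div_mul, hC.div_inv, hdiv]
    abel
  have hj : divDeg k res E = j := by
    have := hC.divDeg_div (u * f⁻¹)
    rw [hdivu, divDeg_sub, divDeg_single, hO] at this
    push_cast at this
    linarith
  have huf : u * f⁻¹ ∈ G := by
    refine Subgroup.subset_closure ⟨mul_mem hu (inv_mem (hGle hf)), ?_⟩
    refine hC.mem_L_single_mono (m := j) (by push_cast; omega) ?_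
    rwa [hC.mem_L_iff, hdivu, add_sub_cancel]
  simpa using G.mul_mem huf hf

/-- The function `π` has a simple zero at `P`, a pole at `O`, and its remaining zeros form a
divisor of degree `t`. -/
def IsUniformizer (O P : Pt) (π : Fˣ) : Prop :=
  ∃ E : Pt →₀ ℤ, 0 ≤ E ∧ divDeg k res E = t ∧
    hC.div π = Finsupp.single P 1 + E - Finsupp.single O ((Module.finrank k (res P) : ℤ) + t)

lemma exists_isUniformizer {O : Pt} (hO : Module.finrank k (res O) = 1) (P : Pt) :
    ∃ π : Fˣ, hC.IsUniformizer O P π := by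
  obtain ⟨π, E, hE, hdeg, hdiv⟩ := hC.exists_div_eq hO (Finsupp.single P 1)
  rw [divDeg_single, mul_one] at hdiv
  exact ⟨π, E, hE, hdeg, hdiv⟩

variable {hC}

namespace IsUniformizer

variable {O P Q : Pt} {π : Fˣ}

lemma ord_of_ne (hπ : hC.IsUniformizer O P π) (hQ : Q ≠ O) (hQP : Q ≠ P)
    (ht : t < Module.finrank k (res Q)) : ord Q (π : F) = 0 := by
  obtain ⟨E, hE, hdeg, hdiv⟩ := hπ
  rw [← hC.div_apply, hdiv]
  simp only [Finsupp.sub_apply, Finsupp.add_apply, Finsupp.single_eq_of_ne hQ,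
    Finsupp.single_eq_of_ne hQP, sub_zero, zero_add]
  by_contra h
  have := finrank_le_divDeg (k := k) (res := res) hE h
  omega

lemma ord_self (hπ : hC.IsUniformizer O P π) (hP : P ≠ O)
    (ht : t < Module.finrank k (res P)) : ord P (π : F) = 1 := by
  obtain ⟨E, hE, hdeg, hdiv⟩ := hπ
  rw [← hC.div_apply, hdiv]
  simp only [Finsupp.sub_apply, Finsupp.add_apply, Finsupp.single_eq_of_ne hP,
    Finsupp.single_eq_same, sub_zero]
  by_contra h
  have := finrank_le_divDeg (k := k) (res := res) hE (P := P) (by omega)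
  omega

lemma mem_L (hπ : hC.IsUniformizer O P π) :
    (π : F) ∈ L (Finsupp.single O ((Module.finrank k (res P) : ℤ) + t)) := by
  obtain ⟨E, hE, -, hdiv⟩ := hπ
  rw [hC.mem_L_iff, hdiv, add_sub_cancel]
  exact add_nonneg (by simp) hE

lemma mem_suppLE (hπ : hC.IsUniformizer O P π) (ht : t < Module.finrank k (res P)) :
    π ∈ hC.suppLE O (Module.finrank k (res P)) := by
  intro Q hQ
  by_cases hQO : Q = O
  · exact Or.inl hQO
  right
  by_cases hQP : Q = P
  · rw [hQP]
  · by_contra h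
    exact hQ (hπ.ord_of_ne hQO hQP (by omega))

lemma div_mem_suppLE (hπ : hC.IsUniformizer O P π) (hO : Module.finrank k (res O) = 1)
    (hPO : P ≠ O) {n : ℕ} (hP : Module.finrank k (res P) = n + 1) (ht : t ≤ n) {w : Fˣ}
    (hw : (w : F) ∈ L (Finsupp.single O (2 * n + 1 : ℤ))) (hord : 0 < ord P (w : F)) :
    w / π ∈ hC.suppLE O n := by
  intro Q hQ
  by_cases hQO : Q = O
  · exact Or.inl hQO
  right
  rw [hC.ord_units_div] at hQ
  by_contra hn
  by_cases hQP : Q = P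
  · subst hQP
    rw [hπ.ord_self hQO (by omega)] at hQ
    have h := divDeg_nonneg (k := k) (res := res)
      (D := Finsupp.single O (2 * n + 1 : ℤ) + hC.div w - Finsupp.single Q 2) (by
        intro R
        have hR := (hC.mem_L_iff _ _).1 hw R
        by_cases hRQ : R = Q
        · subst hRQ
          simp [Finsupp.single_eq_of_ne hQO]
          omega
        · simpa [Finsupp.single_eq_of_ne hRQ] using hR)
    rw [divDeg_sub, divDeg_add, divDeg_single, divDeg_single, hC.divDeg_div, hO, hP] at h
    push_cast at h
    omega
  · rw [hπ.ord_of_ne hQO hQP (by omega), sub_zero] at hQ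
    have h := finrank_le_divDeg (k := k) (res := res) (P := Q)
      (D := Finsupp.single O (2 * n + 1 : ℤ) + hC.div w - Finsupp.single P 1) (by
        intro R
        have hR := (hC.mem_L_iff _ _).1 hw R
        by_cases hRP : R = P
        · subst hRP
          simp [Finsupp.single_eq_of_ne hPO]
          omega
        · simpa [Finsupp.single_eq_of_ne hRP] using hR) (by
        simpa [Finsupp.single_eq_of_ne hQO, Finsupp.single_eq_of_ne hQP] using hQ)
    rw [divDeg_sub, divDeg_add, divDeg_single, divDeg_single, hC.divDeg_div, hO, hP] at h
    push_cast at h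
    omega

end IsUniformizer

variable (hC)

/-- Evaluation at `P ≠ O` of functions regular outside `O`. -/
def evL {O P : Pt} (hP : P ≠ O) (m : ℤ) : L (Finsupp.single O m) →ₗ[k] res P where
  toFun f := ev P f
  map_add' f g := by
    by_cases hf : (f : F) = 0
    · simp [hf, hC.ev_zero]
    by_cases hg : (g : F) = 0
    · simp [hg, hC.ev_zero]
    exact hC.ev_add P f g hf hg (hC.ord_nonneg_of_mem_L_single hP f.2 hf)
      (hC.ord_nonneg_of_mem_L_single hP g.2 hg)
  map_smul' c f := by
    by_cases hf : (f : F) = 0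
    · simp [hf, hC.ev_zero]
    by_cases hc : c = 0
    · simp [hc, hC.ev_zero]
    have hc' : algebraMap k F c ≠ 0 := by simpa using hc
    simp only [SetLike.val_smul, Algebra.smul_def, RingHom.id_apply]
    rw [hC.ev_mul P _ f hc' hf (hC.ord_algebraMap P c hc).ge
      (hC.ord_nonneg_of_mem_L_single hP f.2 hf), hC.ev_algebraMap]

lemma ev_ne_zero (hC : IsProjCurve k F res ord ev L t) {P : Pt} {f : Fˣ}
    (hf : ord P (f : F) = 0) : ev P (f : F) ≠ 0 := by
  rw [ne_eq, hC.ev_eq_zero_iff P f f.ne_zero hf.ge, hf]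
  exact lt_irrefl _

lemma ev_units_mul (hC : IsProjCurve k F res ord ev L t) {P : Pt} {f g : Fˣ}
    (hf : 0 ≤ ord P (f : F)) (hg : 0 ≤ ord P (g : F)) :
    ev P ((f * g : Fˣ) : F) = ev P (f : F) * ev P (g : F) :=
  hC.ev_mul P f g f.ne_zero g.ne_zero hf hg

lemma ev_units_div (hC : IsProjCurve k F res ord ev L t) {P : Pt} {f g : Fˣ}
    (hf : ord P (f : F) = 0) (hg : ord P (g : F) = 0) :
    ev P ((f / g : Fˣ) : F) = ev P (f : F) / ev P (g : F) := by
  rw [eq_div_iff (hC.ev_ne_zero hg), ← hC.ev_units_mul _ hg.ge, div_mul_cancel]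
  rw [hC.ord_units_div, hf, hg, sub_zero]

section Values

variable {O P : Pt}

lemma evL_injective (hO : Module.finrank k (res O) = 1) (hP : P ≠ O) {m : ℕ}
    (hm : m < Module.finrank k (res P)) :
    Function.Injective (hC.evL hP m) := by
  rw [injective_iff_map_eq_zero]
  intro f hf
  by_contra h0
  have h0' : (f : F) ≠ 0 := by simpa using h0
  exact hC.ev_ne_zero (f := Units.mk0 _ h0') (hC.ord_eq_zero_of_mem_L hO hP hm f.2) hf

lemma le_finrank_range_evL (hO : Module.finrank k (res O) = 1) (hP : P ≠ O) {m : ℕ}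
    (hm : m < Module.finrank k (res P)) :
    m + 1 ≤ Module.finrank k (LinearMap.range (hC.evL hP m)) + t := by
  rw [LinearMap.finrank_range_of_inj (hC.evL_injective hO hP hm)]
  have := hC.rr_ineq (Finsupp.single O (m : ℤ))
  rw [divDeg_single, hO] at this
  push_cast at this
  omega

lemma exists_unit_of_mem_range (hP : P ≠ O) {m : ℤ} {y : res P}
    (hy : y ∈ LinearMap.range (hC.evL hP m)) (h0 : y ≠ 0) :
    ∃ f : Fˣ, (f : F) ∈ L (Finsupp.single O m) ∧ ev P (f : F) = y := by
  obtain ⟨f, rfl⟩ := hy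
  have hf : (f : F) ≠ 0 := fun h => h0 (by
    rw [show f = 0 from Subtype.ext h, map_zero])
  exact ⟨Units.mk0 _ hf, f.2, rfl⟩

/-- Every nonzero value at `P` is a quotient of values of functions with small poles. -/
lemma exists_ev_eq_mul_ev (hC : IsProjCurve k F res ord ev L t) (hO : Module.finrank k (res O) = 1)
    (hP : P ≠ O) {n : ℕ} (hPn : Module.finrank k (res P) = n + 1) (hn : 3 * t ≤ n)
    {a : res P} (ha : a ≠ 0) :
    ∃ f g : Fˣ, (f : F) ∈ L (Finsupp.single O (n : ℤ)) ∧
      (g : F) ∈ L (Finsupp.single O ((2 * t : ℕ) : ℤ)) ∧ ev P (f : F) = a * ev P (g : F) := by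
  have := hC.finiteDimensional_res P
  have h₁ := hC.le_finrank_range_evL hO hP (m := n) (by omega)
  have h₂ := hC.le_finrank_range_evL hO hP (m := 2 * t) (by omega)
  have h₃ := finrank_map_mulLeft ha (LinearMap.range (hC.evL hP (2 * t : ℕ)))
  have h := finrank_add_le_finrank_inf_add (LinearMap.range (hC.evL hP n))
    ((LinearMap.range (hC.evL hP (2 * t : ℕ))).map (LinearMap.mulLeft k a))
  obtain ⟨_, ⟨hx, y, hy, rfl⟩, hx0⟩ := exists_ne_zero_of_finrank_pos (V :=
    (LinearMap.range (hC.evL hP n)) ⊓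
      ((LinearMap.range (hC.evL hP (2 * t : ℕ))).map (LinearMap.mulLeft k a))) (by omega)
  rw [LinearMap.mulLeft_apply] at hx hx0
  obtain ⟨f, hf, hfx⟩ := hC.exists_unit_of_mem_range hP hx hx0
  obtain ⟨g, hg, hgy⟩ := hC.exists_unit_of_mem_range hP hy (right_ne_zero_of_mul hx0)
  exact ⟨f, g, hf, hg, by rw [hfx, hgy]⟩

/-- Two nonzero values at `P` are `p / q` and `q / r` for three functions with small poles. -/
lemma exists_ev_chain (hC : IsProjCurve k F res ord ev L t) (hO : Module.finrank k (res O) = 1)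
    (hP : P ≠ O) {n : ℕ} (hPn : Module.finrank k (res P) = n + 1) (hn : 3 * t ≤ n)
    {a b : res P} (ha : a ≠ 0) (hb : b ≠ 0) :
    ∃ p q r : Fˣ, (p : F) ∈ L (Finsupp.single O (n : ℤ)) ∧
      (q : F) ∈ L (Finsupp.single O (n : ℤ)) ∧ (r : F) ∈ L (Finsupp.single O (n : ℤ)) ∧
      ev P (p : F) = a * ev P (q : F) ∧ ev P (q : F) = b * ev P (r : F) := by
  have := hC.finiteDimensional_res P
  set V := LinearMap.range (hC.evL hP n)
  have h₁ : n + 1 ≤ Module.finrank k V + t := hC.le_finrank_range_evL hO hP (by omega)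
  have h₂ := finrank_map_mulLeft hb V
  have h₃ := finrank_map_mulLeft ha V
  have h₄ := finrank_map_mulLeft ha (V.map (LinearMap.mulLeft k b))
  have h := finrank_add_le_finrank_inf_add V (V.map (LinearMap.mulLeft k a))
  have h' := finrank_add_le_finrank_inf_add (V ⊓ V.map (LinearMap.mulLeft k a))
    ((V.map (LinearMap.mulLeft k b)).map (LinearMap.mulLeft k a))
  obtain ⟨_, ⟨⟨hp, q, hq, rfl⟩, q', ⟨r, hr, rfl⟩, hqr⟩, h0⟩ := exists_ne_zero_of_finrank_pos (V :=
    V ⊓ V.map (LinearMap.mulLeft k a) ⊓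
      (V.map (LinearMap.mulLeft k b)).map (LinearMap.mulLeft k a)) (by omega)
  simp only [LinearMap.mulLeft_apply] at hp hqr h0
  have hqr' := mul_left_cancel₀ ha hqr
  have hq0 := right_ne_zero_of_mul h0
  obtain ⟨p, hpL, hpe⟩ := hC.exists_unit_of_mem_range hP hp h0
  obtain ⟨s, hsL, hse⟩ := hC.exists_unit_of_mem_range hP hq hq0
  obtain ⟨r', hrL, hre⟩ := hC.exists_unit_of_mem_range hP hr
    (right_ne_zero_of_mul (a := b) (hqr' ▸ hq0))
  exact ⟨p, s, r', hpL, hsL, hrL, by rw [hpe, hse], by rw [hse, hre, hqr']⟩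

end Values

/-- The group of functions supported in degrees at most `n + 1` is generated by those supported
in degrees at most `n` and uniformizers at the points of degree `n + 1`. -/
lemma suppLE_succ_le_closure {O : Pt} {n : ℕ} (hn : 3 * t ≤ n) {π : Pt → Fˣ}
    (hπ : ∀ P, hC.IsUniformizer O P (π P)) :
    hC.suppLE O (n + 1) ≤ Subgroup.closure ((hC.suppLE O n : Set Fˣ) ∪
      {f | ∃ P, P ≠ O ∧ Module.finrank k (res P) = n + 1 ∧ f = π P}) := by
  classical
  set G := Subgroup.closure ((hC.suppLE O n : Set Fˣ) ∪
      {f | ∃ P, P ≠ O ∧ Module.finrank k (res P) = n + 1 ∧ f = π P})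
  have key : ∀ s : Finset Pt, ∀ u ∈ hC.suppLE O (n + 1),
      (∀ P, P ≠ O → Module.finrank k (res P) = n + 1 → ord P (u : F) ≠ 0 → P ∈ s) → u ∈ G := by
    intro s
    induction s using Finset.induction_on with
    | empty =>
      intro u hu hs
      refine Subgroup.subset_closure (Or.inl fun P hP => ?_)
      by_cases hPO : P = O
      · exact Or.inl hPO
      have h := (hu P hP).resolve_left hPO
      rcases h.lt_or_eq with h | h
      · exact Or.inr (by omega)
      · exact absurd (hs P hPO h hP) (Finset.notMem_empty P)
    | insert Q s _ ih =>
      intro u hu hs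
      by_cases hQ : Q ≠ O ∧ Module.finrank k (res Q) = n + 1
      · have hπG : π Q ∈ G := Subgroup.subset_closure (Or.inr ⟨Q, hQ.1, hQ.2, rfl⟩)
        have hπU : π Q ∈ hC.suppLE O (n + 1) := hQ.2 ▸ (hπ Q).mem_suppLE (by omega)
        have := ih (u / π Q ^ ord Q (u : F)) (div_mem hu (zpow_mem hπU _)) (by
          intro P hPO hPn hP
          rw [hC.ord_units_div, hC.ord_units_zpow] at hP
          by_cases hPQ : P = Q
          · subst hPQ
            rw [(hπ P).ord_self hPO (by omega)] at hP
            simp at hP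
          · rw [(hπ Q).ord_of_ne hPO hPQ (by omega)] at hP
            exact (Finset.mem_insert.1 (hs P hPO hPn (by simpa using hP))).resolve_left hPQ)
        have := G.mul_mem this (zpow_mem hπG (ord Q (u : F)))
        rwa [div_mul_cancel] at this
      · refine ih u hu fun P hPO hPn hP => ?_
        refine (Finset.mem_insert.1 (hs P hPO hPn hP)).resolve_left ?_
        rintro rfl
        exact hQ ⟨hPO, hPn⟩
  intro u hu
  exact key (hC.div u).support u hu fun P _ _ hP => by simpa using hP

section Step

variable {O P : Pt}

lemma exists_symbol_eq_zero (hO : Module.finrank k (res O) = 1) {n : ℕ} (hn : 3 * t ≤ n)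
    {π : Fˣ} (hπ : hC.IsUniformizer O P π) (hP : P ≠ O)
    (hPn : Module.finrank k (res P) = n + 1) {a b : Fˣ} (hab : a ≠ b)
    (ha : (a : F) ∈ L (Finsupp.single O (2 * n + 1 : ℤ)))
    (hb : (b : F) ∈ L (Finsupp.single O (2 * n + 1 : ℤ))) (he : ev P (a : F) = ev P (b : F)) :
    ∃ h ∈ hC.suppLE O n, symbol (a / b) (π * (h / b)) = 0 := by
  have hw0 : (b : F) - a ≠ 0 := sub_ne_zero.2 fun h => hab (Units.ext h.symm)
  have hw := (L (Finsupp.single O (2 * n + 1 : ℤ))).sub_mem hb ha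
  have hev : ev P ((b : F) - a) = 0 := by
    have := (hC.evL hP (2 * n + 1)).map_sub ⟨b, hb⟩ ⟨a, ha⟩
    exact this.trans (sub_eq_zero.2 he.symm)
  rw [hC.ev_eq_zero_iff P _ hw0 (hC.ord_nonneg_of_mem_L_single hP hw hw0)] at hev
  refine ⟨Units.mk0 _ hw0 / π, hπ.div_mem_suppLE hO hP hPn (by omega) hw hev, ?_⟩
  apply symbol_eq_zero_of_add_eq_one
  have := π.ne_zero
  have := b.ne_zero
  push_cast
  rw [Units.val_mk0]
  field_simp
  ring

lemma symbol_div_mem_Fsub (hO : Module.finrank k (res O) = 1) {n : ℕ} (hn : 3 * t ≤ n)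
    {π : Fˣ} (hπ : hC.IsUniformizer O P π) (hP : P ≠ O)
    (hPn : Module.finrank k (res P) = n + 1) {a b : Fˣ}
    (haU : a ∈ hC.suppLE O n) (hbU : b ∈ hC.suppLE O n)
    (ha : (a : F) ∈ L (Finsupp.single O (2 * n + 1 : ℤ)))
    (hb : (b : F) ∈ L (Finsupp.single O (2 * n + 1 : ℤ))) (he : ev P (a : F) = ev P (b : F)) :
    symbol (a / b) π ∈ Fsub k res ord n := by
  by_cases hab : a = b
  · rw [hab, div_self', symbol_one_left]
    exact zero_mem _
  obtain ⟨h, hh, hs⟩ := hC.exists_symbol_eq_zero hO hn hπ hP hPn hab ha hb he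
  rw [symbol_mul_right] at hs
  rw [eq_neg_of_add_eq_zero_left hs]
  exact neg_mem (hC.symbol_mem_Fsub hO (div_mem haU hbU) (div_mem hh hbU))

/-- Modulo `Fsub n`, the symbol `{f / g, π}` depends only on the value of `f / g` at `P`. -/
lemma symbol_div_sub_mem_Fsub (hO : Module.finrank k (res O) = 1) {n : ℕ} (hn : 3 * t ≤ n)
    {π : Fˣ} (hπ : hC.IsUniformizer O P π) (hP : P ≠ O)
    (hPn : Module.finrank k (res P) = n + 1) {f g f' g' : Fˣ}
    (hf : (f : F) ∈ L (Finsupp.single O (n : ℤ))) (hg : (g : F) ∈ L (Finsupp.single O (n : ℤ)))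
    (hf' : (f' : F) ∈ L (Finsupp.single O (n : ℤ)))
    (hg' : (g' : F) ∈ L (Finsupp.single O (n : ℤ)))
    (he : ev P (f : F) * ev P (g' : F) = ev P (f' : F) * ev P (g : F)) :
    symbol (f / g) π - symbol (f' / g') π ∈ Fsub k res ord n := by
  have hU : ∀ {u : Fˣ}, (u : F) ∈ L (Finsupp.single O (n : ℤ)) → u ∈ hC.suppLE O n :=
    hC.mem_suppLE_of_mem_L hO le_rfl
  have hL : ∀ {u v : Fˣ}, (u : F) ∈ L (Finsupp.single O (n : ℤ)) →
      (v : F) ∈ L (Finsupp.single O (n : ℤ)) →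
      ((u * v : Fˣ) : F) ∈ L (Finsupp.single O (2 * n + 1 : ℤ)) := fun hu hv =>
    hC.mem_L_single_mono (by omega) (hC.mul_mem_L_single hu hv)
  have hord : ∀ {u : Fˣ}, (u : F) ∈ L (Finsupp.single O (n : ℤ)) → 0 ≤ ord P (u : F) :=
    fun {u} hu => hC.ord_nonneg_of_mem_L_single hP hu u.ne_zero
  rw [← symbol_div_left, show f / g / (f' / g') = (f * g') / (f' * g) by
    rw [div_div_div_eq, mul_comm g f']]
  refine hC.symbol_div_mem_Fsub hO hn hπ hP hPn (mul_mem (hU hf) (hU hg'))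
    (mul_mem (hU hf') (hU hg)) (hL hf hg') (hL hf' hg) ?_
  rwa [hC.ev_units_mul (hord hf) (hord hg'), hC.ev_units_mul (hord hf') (hord hg)]

/-- Modulo `Fsub n`, every symbol `{u, π}` with `u` supported in degrees at most `n` is
represented by a quotient of functions with small poles. -/
lemma exists_symbol_sub_mem_Fsub (hO : Module.finrank k (res O) = 1) {n : ℕ} (hn : 3 * t ≤ n)
    {π : Fˣ} (hπ : hC.IsUniformizer O P π) (hP : P ≠ O)
    (hPn : Module.finrank k (res P) = n + 1) {u : Fˣ} (hu : u ∈ hC.suppLE O n) :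
    ∃ f g : Fˣ, (f : F) ∈ L (Finsupp.single O (n : ℤ)) ∧
      (g : F) ∈ L (Finsupp.single O (n : ℤ)) ∧
      symbol u π - symbol (f / g) π ∈ Fsub k res ord n := by
  have hord : ∀ {u : Fˣ}, (u : F) ∈ L (Finsupp.single O (n : ℤ)) → ord P (u : F) = 0 :=
    fun {u} hu => hC.ord_eq_zero_of_mem_L hO hP (by omega) hu
  have hone : ((1 : Fˣ) : F) ∈ L (Finsupp.single O (n : ℤ)) := by
    rw [hC.mem_L_iff, hC.div_one]
    simp
  have hu' := hC.suppLE_le_closure hO hn hu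
  clear hu
  induction hu' using Subgroup.closure_induction with
  | one => exact ⟨1, 1, hone, hone, by simp⟩
  | inv x _ hx =>
    obtain ⟨f, g, hf, hg, h⟩ := hx
    refine ⟨g, f, hg, hf, ?_⟩
    rw [← inv_div f g, symbol_inv_left, symbol_inv_left, ← neg_sub', neg_mem_iff]
    exact h
  | mul x y _ _ hx hy =>
    obtain ⟨f, g, hf, hg, h⟩ := hx
    obtain ⟨f', g', hf', hg', h'⟩ := hy
    obtain ⟨p, q, r, hp, hq, hr, hpq, hqr⟩ := hC.exists_ev_chain hO hP hPn hn
      (hC.ev_ne_zero (f := f / g) (by rw [hC.ord_units_div, hord hf, hord hg, sub_zero]))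
      (hC.ev_ne_zero (f := f' / g') (by rw [hC.ord_units_div, hord hf', hord hg', sub_zero]))
    rw [hC.ev_units_div (hord hf) (hord hg)] at hpq
    rw [hC.ev_units_div (hord hf') (hord hg')] at hqr
    have hg0 := hC.ev_ne_zero (hord hg)
    have hg0' := hC.ev_ne_zero (hord hg')
    refine ⟨p, r, hp, hr, ?_⟩
    have h₁ := hC.symbol_div_sub_mem_Fsub hO hn hπ hP hPn hf hg hp hq
      (by rw [hpq]; field_simp)
    have h₂ := hC.symbol_div_sub_mem_Fsub hO hn hπ hP hPn hf' hg' hq hr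
      (by rw [hqr]; field_simp)
    have := add_mem (add_mem h h₁) (add_mem h' h₂)
    rw [symbol_mul_left, symbol_div_left p r]
    rw [symbol_div_left p q, symbol_div_left q r] at this
    convert this using 1
    abel
  | mem w hw =>
    have hw0 : ord P (w : F) = 0 := hC.ord_eq_zero_of_mem_suppLE hw.1 hP (by omega)
    obtain ⟨f, g, hf, hg, he⟩ := hC.exists_ev_eq_mul_ev hO hP hPn hn (hC.ev_ne_zero hw0)
    have hg' := hC.mem_L_single_mono (n := n) (by omega) hg
    refine ⟨f, g, hf, hg', ?_⟩
    rw [← symbol_div_left, div_div_eq_mul_div]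
    refine hC.symbol_div_mem_Fsub hO hn hπ hP hPn
      (mul_mem hw.1 (hC.mem_suppLE_of_mem_L hO le_rfl hg')) (hC.mem_suppLE_of_mem_L hO le_rfl hf)
      (hC.mem_L_single_mono (by push_cast; omega) (hC.mul_mem_L_single hw.2 hg))
      (hC.mem_L_single_mono (by omega) hf) ?_
    rw [hC.ev_units_mul hw0.ge (hord hg').ge, he]

/-- Modulo `Fsub n`, every element of `Fsub (n + 1)` is a sum of symbols `{u, π P}`, one for each
of finitely many points `P` of degree `n + 1`. -/
lemma exists_sub_sum_symbol_mem_Fsub (hO : Module.finrank k (res O) = 1) {n : ℕ} (hn : 3 * t ≤ n)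
    {π : Pt → Fˣ} (hπ : ∀ P, hC.IsUniformizer O P (π P))
    {x : K2 F} (hx : x ∈ Fsub k res ord (n + 1)) :
    ∃ (s : Finset Pt) (u : Pt → Fˣ),
      (∀ P ∈ s, P ≠ O ∧ Module.finrank k (res P) = n + 1) ∧ (∀ P, u P ∈ hC.suppLE O n) ∧
      x - ∑ P ∈ s, symbol (u P) (π P) ∈ Fsub k res ord n := by
  classical
  let N : AddSubgroup (K2 F) :=
    { carrier := {x | ∃ (s : Finset Pt) (u : Pt → Fˣ),
        (∀ P ∈ s, P ≠ O ∧ Module.finrank k (res P) = n + 1) ∧ (∀ P, u P ∈ hC.suppLE O n) ∧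
        x - ∑ P ∈ s, symbol (u P) (π P) ∈ Fsub k res ord n}
      zero_mem' := ⟨∅, 1, by simp, fun _ => one_mem _, by simp⟩
      neg_mem' := by
        rintro x ⟨s, u, hs, hu, hx⟩
        refine ⟨s, u⁻¹, hs, fun P => inv_mem (hu P), ?_⟩
        simp only [Pi.inv_apply, symbol_inv_left, Finset.sum_neg_distrib]
        rw [← neg_sub']
        exact neg_mem hx
      add_mem' := by
        rintro x y ⟨s, u, hs, hu, hx⟩ ⟨s', u', hs', hu', hy⟩
        refine ⟨s ∪ s', fun P => (if P ∈ s then u P else 1) * (if P ∈ s' then u' P else 1),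
          fun P hP => (Finset.mem_union.1 hP).elim (hs P) (hs' P), fun P => mul_mem ?_ ?_, ?_⟩
        · split_ifs
          exacts [hu P, one_mem _]
        · split_ifs
          exacts [hu' P, one_mem _]
        · have aux : ∀ r ⊆ s ∪ s', ∀ v : Pt → Fˣ,
              ∑ P ∈ s ∪ s', symbol (if P ∈ r then v P else 1) (π P) =
                ∑ P ∈ r, symbol (v P) (π P) := by
            intro r hr v
            rw [← Finset.sum_subset hr]
            · exact Finset.sum_congr rfl fun P hP => by rw [if_pos hP]
            · intro P _ hP
              rw [if_neg hP, symbol_one_left]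
          simp only [symbol_mul_left, Finset.sum_add_distrib]
          rw [aux s Finset.subset_union_left, aux s' Finset.subset_union_right,
            add_sub_add_comm]
          exact add_mem hx hy }
  have hFN : Fsub k res ord n ≤ N := fun x hx => ⟨∅, 1, by simp, fun _ => one_mem _, by simpa⟩
  have hUU : ∀ a ∈ hC.suppLE O n, ∀ b ∈ hC.suppLE O n, symbol a b ∈ N :=
    fun a ha b hb => hFN (hC.symbol_mem_Fsub hO ha hb)
  have hUπ : ∀ u ∈ hC.suppLE O n, ∀ P, P ≠ O → Module.finrank k (res P) = n + 1 →
      symbol u (π P) ∈ N := fun u hu P hP hPn =>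
    ⟨{P}, fun _ => u, by simp [hP, hPn], fun _ => hu, by simp⟩
  have hπU : ∀ u ∈ hC.suppLE O n, ∀ P, P ≠ O → Module.finrank k (res P) = n + 1 →
      symbol (π P) u ∈ N := fun u hu P hP hPn => by
    rw [symbol_swap]
    exact N.neg_mem (hUπ u hu P hP hPn)
  have hππ : ∀ Q, Q ≠ O → Module.finrank k (res Q) = n + 1 →
      ∀ P, P ≠ O → Module.finrank k (res P) = n + 1 → symbol (π Q) (π P) ∈ N := by
    intro Q hQ hQn P hP hPn
    by_cases hPQ : P = Q
    · subst hPQ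
      rw [symbol_self]
      exact hUπ _ (hC.neg_one_mem_suppLE O n) P hP hPn
    have hw0 : ord P (π Q : F) = 0 := (hπ Q).ord_of_ne hP hPQ (by omega)
    obtain ⟨f, g, hf, hg, he⟩ := hC.exists_ev_eq_mul_ev hO hP hPn hn (hC.ev_ne_zero hw0)
    have hg' := hC.mem_L_single_mono (n := n) (by omega) hg
    have hfU := hC.mem_suppLE_of_mem_L hO le_rfl hf
    have hgU := hC.mem_suppLE_of_mem_L hO le_rfl hg'
    have hne : π Q * g ≠ f := by
      intro h
      have := hC.ord_units_mul Q (π Q) g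
      rw [h, hC.ord_eq_zero_of_mem_suppLE hfU hQ (by omega),
        hC.ord_eq_zero_of_mem_suppLE hgU hQ (by omega), (hπ Q).ord_self hQ (by omega)] at this
      omega
    have hπL := (hπ Q).mem_L
    rw [hQn] at hπL
    obtain ⟨h, hh, hs⟩ := hC.exists_symbol_eq_zero hO hn (hπ P) hP hPn hne
      (hC.mem_L_single_mono (by push_cast; omega) (hC.mul_mem_L_single hπL hg))
      (hC.mem_L_single_mono (by omega) hf)
      (by rw [hC.ev_units_mul hw0.ge (hC.ord_nonneg_of_mem_L_single hP hg g.ne_zero), he])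
    have hgf := div_mem hgU hfU
    have hhf := div_mem hh hfU
    rw [mul_div_assoc, symbol_mul_left, symbol_mul_right, symbol_mul_right, add_assoc] at hs
    rw [eq_neg_of_add_eq_zero_left hs]
    exact N.neg_mem (N.add_mem (hπU _ hhf Q hQ hQn)
      (N.add_mem (hUπ _ hgf P hP hPn) (hUU _ hgf _ hhf)))
  have hle : Fsub k res ord (n + 1) ≤ N := by
    refine (AddSubgroup.closure_le _).2 ?_
    rintro _ ⟨a, b, ha, hb, rfl⟩
    refine symbol_mem_of_mem_closure ?_
      (hC.suppLE_succ_le_closure hn hπ fun P hP => Or.inr (ha P hP))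
      (hC.suppLE_succ_le_closure hn hπ fun P hP => Or.inr (hb P hP))
    rintro a (ha | ⟨Q, hQ, hQn, rfl⟩) b (hb | ⟨P, hP, hPn, rfl⟩)
    · exact hUU a ha b hb
    · exact hUπ a ha P hP hPn
    · exact hπU b hb Q hQ hQn
    · exact hππ Q hQ hQn P hP hPn
  exact hle hx

end Step

section TameSymbol

variable {T : K2 F →+ Π₀ P : Pt, Additive ((res P)ˣ)}

lemma tame_symbol_eq_zero (hC : IsProjCurve k F res ord ev L t)
    (hT : IsTameSymbol ord ev T) {f g : Fˣ} {P : Pt} (hf : ord P (f : F) = 0)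
    (hg : ord P (g : F) = 0) : T (symbol f g) P = 0 := by
  have h := hT f g P
  rw [hf, hg] at h
  simp only [mul_zero, zpow_zero, neg_zero, mul_one, Units.val_one, hC.ev_one] at h
  exact Units.ext h

lemma tame_eq_zero_of_mem_Fsub (hC : IsProjCurve k F res ord ev L t)
    (hT : IsTameSymbol ord ev T) {n : ℕ} {x : K2 F} (hx : x ∈ Fsub k res ord n) {P : Pt}
    (hP : n < Module.finrank k (res P)) : T x P = 0 := by
  induction hx using AddSubgroup.closure_induction with
  | zero => simp
  | add x y _ _ hx hy => rw [map_add, DFinsupp.add_apply, hx, hy, add_zero]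
  | neg x _ hx => rw [map_neg, DFinsupp.neg_apply, hx, neg_zero]
  | mem x hx =>
    obtain ⟨f, g, hf, hg, rfl⟩ := hx
    apply hC.tame_symbol_eq_zero hT
    · by_contra h
      exact absurd (hf P h) (by omega)
    · by_contra h
      exact absurd (hg P h) (by omega)

lemma symbol_mem_Fsub_of_ev_eq_one (hC : IsProjCurve k F res ord ev L t)
    (hT : IsTameSymbol ord ev T) {O : Pt} (hO : Module.finrank k (res O) = 1)
    {n : ℕ} (hn : 3 * t ≤ n) {P : Pt} {π : Fˣ} (hπ : hC.IsUniformizer O P π) (hP : P ≠ O)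
    (hPn : Module.finrank k (res P) = n + 1) {u : Fˣ} (hu : u ∈ hC.suppLE O n)
    (he : ev P (u : F) = 1) : symbol u π ∈ Fsub k res ord n := by
  obtain ⟨f, g, hf, hg, h⟩ := hC.exists_symbol_sub_mem_Fsub hO hn hπ hP hPn hu
  have hf0 := hC.ord_eq_zero_of_mem_L hO hP (by omega) hf
  have hg0 := hC.ord_eq_zero_of_mem_L hO hP (by omega) hg
  have hπ1 := hπ.ord_self hP (by omega)
  have h0 : T (symbol u π) P = T (symbol (f / g) π) P := by
    have := hC.tame_eq_zero_of_mem_Fsub hT h (P := P) (by omega)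
    rwa [map_sub, DFinsupp.sub_apply, sub_eq_zero] at this
  have h1 : ev P (u : F) = ev P ((f / g : Fˣ) : F) := by
    rw [← hT.apply_symbol (hC.ord_eq_zero_of_mem_suppLE hu hP (by omega)) hπ1, h0,
      hT.apply_symbol (by rw [hC.ord_units_div, hf0, hg0, sub_zero]) hπ1]
  rw [he, hC.ev_units_div hf0 hg0, eq_comm, div_eq_one_iff_eq (hC.ev_ne_zero hg0)] at h1
  have hfg : f = g := by
    have := hC.evL_injective hO hP (m := n) (by omega) (a₁ := ⟨f, hf⟩) (a₂ := ⟨g, hg⟩) h1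
    exact Units.ext (congrArg Subtype.val this)
  rwa [hfg, div_self', symbol_one_left, sub_zero] at h

/-- An element of `Fsub (n + 1)` with trivial tame symbols in degree `n + 1` lies in `Fsub n`. -/
lemma mem_Fsub_of_mem_Fsub_succ (hC : IsProjCurve k F res ord ev L t)
    (hT : IsTameSymbol ord ev T) {O : Pt} (hO : Module.finrank k (res O) = 1)
    {n : ℕ} (hn : 3 * t ≤ n) {x : K2 F} (hx : x ∈ Fsub k res ord (n + 1))
    (hTx : ∀ P, P ≠ O → Module.finrank k (res P) = n + 1 → T x P = 0) :
    x ∈ Fsub k res ord n := by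
  choose π hπ using fun P => hC.exists_isUniformizer hO P
  obtain ⟨s, u, hs, hu, h⟩ := hC.exists_sub_sum_symbol_mem_Fsub hO hn hπ hx
  have hsum : ∑ P ∈ s, symbol (u P) (π P) ∈ Fsub k res ord n := by
    refine sum_mem fun P hPs => ?_
    obtain ⟨hP, hPn⟩ := hs P hPs
    refine hC.symbol_mem_Fsub_of_ev_eq_one hT hO hn (hπ P) hP hPn (hu P) ?_
    have h0 := hC.tame_eq_zero_of_mem_Fsub hT h (P := P) (by omega)
    rw [map_sub, DFinsupp.sub_apply, hTx P hP hPn, zero_sub, neg_eq_zero, map_sum,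
      DFinsupp.finsetSum_apply, Finset.sum_eq_single_of_mem P hPs] at h0
    · rw [← hT.apply_symbol
        (hC.ord_eq_zero_of_mem_suppLE (hu P) hP (by omega)) ((hπ P).ord_self hP (by omega)), h0]
      rfl
    · intro Q _ hQP
      exact hC.tame_symbol_eq_zero hT (hC.ord_eq_zero_of_mem_suppLE (hu Q) hP (by omega))
        ((hπ Q).ord_of_ne hP hQP.symm (by omega))
  simpa using add_mem h hsum

/-- Every value in degree `n + 1` is attained by the tame symbol, without affecting the other
points of degree larger than `n`. -/
lemma exists_tame_eq_single (hC : IsProjCurve k F res ord ev L t)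
    (hT : IsTameSymbol ord ev T) {O : Pt} (hO : Module.finrank k (res O) = 1)
    {n : ℕ} (hn : 3 * t ≤ n) {P : Pt} (hP : P ≠ O) (hPn : Module.finrank k (res P) = n + 1)
    (y : Additive (res P)ˣ) : ∃ x : K2 F, T x P = y ∧
      ∀ Q, Q ≠ O → Q ≠ P → n < Module.finrank k (res Q) → T x Q = 0 := by
  obtain ⟨π, hπ⟩ := hC.exists_isUniformizer hO P
  obtain ⟨f, g, hf, hg, he⟩ := hC.exists_ev_eq_mul_ev hO hP hPn hn (Units.ne_zero y.toMul)
  have hg := hC.mem_L_single_mono (n := n) (by omega) hg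
  have hf0 := hC.ord_eq_zero_of_mem_L hO hP (by omega) hf
  have hg0 := hC.ord_eq_zero_of_mem_L hO hP (by omega) hg
  refine ⟨symbol (f / g) π, ?_, fun Q hQ hQP hQn => ?_⟩
  · refine Units.ext ((hT.apply_symbol ?_ (hπ.ord_self hP (by omega))).trans ?_)
    · rw [hC.ord_units_div, hf0, hg0, sub_zero]
    · rw [hC.ev_units_div hf0 hg0, he, mul_div_cancel_right₀ _ (hC.ev_ne_zero hg0)]
      rfl
  · exact hC.tame_symbol_eq_zero hT (hC.ord_eq_zero_of_mem_suppLE (div_mem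
      (hC.mem_suppLE_of_mem_L hO le_rfl hf) (hC.mem_suppLE_of_mem_L hO le_rfl hg)) hQ hQn)
      (hπ.ord_of_ne hQ hQP (by omega))

/-- An element with trivial tame symbols outside `O` in degrees larger than `n` lies in
`Fsub n`. -/
lemma mem_Fsub_of_tame_eq_zero (hC : IsProjCurve k F res ord ev L t)
    (hT : IsTameSymbol ord ev T) {O : Pt} (hO : Module.finrank k (res O) = 1)
    {n : ℕ} (hn : 3 * t ≤ n) {x : K2 F}
    (hTx : ∀ P, P ≠ O → n < Module.finrank k (res P) → T x P = 0) : x ∈ Fsub k res ord n := by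
  obtain ⟨m, hm⟩ : ∃ m, x ∈ Fsub k res ord (n + m) := by
    classical
    let N : AddSubgroup (K2 F) :=
      { carrier := {x | ∃ m, x ∈ Fsub k res ord (n + m)}
        zero_mem' := ⟨0, zero_mem _⟩
        neg_mem' := fun ⟨m, hm⟩ => ⟨m, neg_mem hm⟩
        add_mem' := fun ⟨m, hm⟩ ⟨m', hm'⟩ => ⟨max m m', add_mem
          (Fsub_mono (by omega) hm) (Fsub_mono (by omega) hm')⟩ }
    refine K2_induction (N := N) (fun a b => ?_) x
    refine ⟨∑ P ∈ (hC.div a).support ∪ (hC.div b).support, Module.finrank k (res P), ?_⟩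
    have hle : ∀ P ∈ (hC.div a).support ∪ (hC.div b).support, Module.finrank k (res P) ≤
        n + ∑ P ∈ (hC.div a).support ∪ (hC.div b).support, Module.finrank k (res P) :=
      fun P hP => (Finset.single_le_sum (f := fun P => Module.finrank k (res P))
        (fun _ _ => Nat.zero_le _) hP).trans (Nat.le_add_left _ _)
    exact AddSubgroup.subset_closure ⟨a, b,
      fun P hP => hle P (Finset.mem_union_left _ (by simpa using hP)),
      fun P hP => hle P (Finset.mem_union_right _ (by simpa using hP)), rfl⟩
  induction m with
  | zero => exact hm
  | succ m ih =>
    exact ih (hC.mem_Fsub_of_mem_Fsub_succ hT hO (n := n + m) (by omega) hm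
      fun P hP hPn => hTx P hP (by omega))

/-- Every family of values is attained by the tame symbol outside `O` in degrees larger
than `n`. -/
lemma exists_tame_eq (hC : IsProjCurve k F res ord ev L t)
    (hT : IsTameSymbol ord ev T) {O : Pt} (hO : Module.finrank k (res O) = 1)
    {n : ℕ} (hn : 3 * t ≤ n) (y : Π₀ P : Pt, Additive ((res P)ˣ)) :
    ∃ x : K2 F, ∀ P, P ≠ O → n < Module.finrank k (res P) → (y - T x) P = 0 := by
  classical
  have key : ∀ (m : ℕ) (y : Π₀ P : Pt, Additive ((res P)ˣ)),
      (∀ P, P ≠ O → n + m < Module.finrank k (res P) → y P = 0) →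
      ∃ x : K2 F, ∀ P, P ≠ O → n < Module.finrank k (res P) → (y - T x) P = 0 := by
    intro m
    induction m with
    | zero => exact fun y hy => ⟨0, by simpa using hy⟩
    | succ m ih =>
      intro y hy
      have hx : ∀ P, ∃ x : K2 F, P ≠ O → Module.finrank k (res P) = n + m + 1 → T x P = y P ∧
          ∀ Q, Q ≠ O → Q ≠ P → n + m < Module.finrank k (res Q) → T x Q = 0 := by
        intro P
        by_cases hP : P ≠ O ∧ Module.finrank k (res P) = n + m + 1
        · obtain ⟨x, hx⟩ := hC.exists_tame_eq_single hT hO (n := n + m) (by omega) hP.1 hP.2 (y P)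
          exact ⟨x, fun _ _ => hx⟩
        · exact ⟨0, fun h h' => absurd ⟨h, h'⟩ hP⟩
      choose x hx using hx
      set s := y.support.filter fun P => P ≠ O ∧ Module.finrank k (res P) = n + m + 1
      have hTx : ∀ Q, Q ≠ O → n + m < Module.finrank k (res Q) →
          T (∑ P ∈ s, x P) Q = y Q := by
        intro Q hQ hQn
        have hne : ∀ P ∈ s, P ≠ Q → T (x P) Q = 0 := fun P hP hPQ =>
          (hx P (Finset.mem_filter.1 hP).2.1 (Finset.mem_filter.1 hP).2.2).2 Q hQ hPQ.symm hQn
        rw [map_sum, DFinsupp.finsetSum_apply]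
        by_cases hQs : Q ∈ s
        · rw [Finset.sum_eq_single_of_mem Q hQs hne]
          exact (hx Q hQ (Finset.mem_filter.1 hQs).2.2).1
        · rw [Finset.sum_eq_zero fun P hP => hne P hP fun h => hQs (h ▸ hP)]
          by_contra h
          have hQm : Module.finrank k (res Q) = n + m + 1 := by
            by_contra h'
            exact h (hy Q hQ (by omega)).symm
          exact hQs (Finset.mem_filter.2 ⟨DFinsupp.mem_support_iff.2 (Ne.symm h), hQ, hQm⟩)
      obtain ⟨z, hz⟩ := ih (y - T (∑ P ∈ s, x P)) fun Q hQ hQn => by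
        rw [DFinsupp.sub_apply, hTx Q hQ hQn, sub_self]
      refine ⟨∑ P ∈ s, x P + z, fun Q hQ hQn => ?_⟩
      have := hz Q hQ hQn
      rw [DFinsupp.sub_apply, DFinsupp.sub_apply] at this
      rwa [map_add, DFinsupp.sub_apply, DFinsupp.add_apply, ← sub_sub]
  refine key (∑ P ∈ y.support, Module.finrank k (res P)) y fun P _ hP => ?_
  by_contra h
  have := Finset.single_le_sum (f := fun P => Module.finrank k (res P))
    (fun _ _ => Nat.zero_le _) (DFinsupp.mem_support_iff.2 h)
  omega

end TameSymbol

end IsProjCurve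

/-- last part of Theorem `introker1`.  Let `C` be a regular,
irreducible curve, projective over `k`, with function field `F`, arithmetic genus `t`
and a `k`-rational point `O`.  For every `d ≥ 3t + 1`, the tame symbol
`T : K₂(F) → ∐_{P ∈ C} k(P)^*` and its restriction
`F_{d-1} → ∐_{P ∈ {O} ∪ C_{≤ d-1}} k(P)^*` yield the same kernel and cokernel:
(i) the kernel of `T` is contained in `F_{d-1}` (so the two kernels coincide);
(ii) the restriction of `T` to `F_{d-1}` is supported in `{O} ∪ C_{≤ d-1}`;
(iii) & (iv) the inclusion induces a bijection between the two cokernels. -/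
theorem statement4 (k F : Type*) [Field k] [Field F] [Algebra k F]
    {Pt : Type*} (res : Pt → Type*) [∀ P, Field (res P)] [∀ P, Algebra k (res P)]
    (ord : Pt → F → ℤ) (ev : ∀ P, F → res P)
    (L : (Pt →₀ ℤ) → Submodule k F) (t : ℕ)
    (hC : IsProjCurve k F res ord ev L t)
    (O : Pt) (hO : Module.finrank k (res O) = 1)
    (T : K2 F →+ Π₀ P : Pt, Additive ((res P)ˣ)) (hT : IsTameSymbol ord ev T)
    (d : ℕ) (hd : 3 * t + 1 ≤ d) :
    -- (i) the two kernels coincide: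
    (∀ x : K2 F, T x = 0 → x ∈ Fsub k res ord (d - 1)) ∧
    -- (ii) the restriction lands in `∐_{P ∈ {O} ∪ C_{≤ d-1}} k(P)^*`:
    (∀ x ∈ Fsub k res ord (d - 1),
      ∀ P, ¬(P = O ∨ Module.finrank k (res P) ≤ d - 1) → T x P = 0) ∧
    -- (iii) the induced map between the cokernels is injective:
    (∀ y : Π₀ P : Pt, Additive ((res P)ˣ),
      (∀ P, ¬(P = O ∨ Module.finrank k (res P) ≤ d - 1) → y P = 0) →
      (∃ x : K2 F, T x = y) → ∃ x ∈ Fsub k res ord (d - 1), T x = y) ∧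
    -- (iv) the induced map between the cokernels is surjective:
    (∀ y : Π₀ P : Pt, Additive ((res P)ˣ),
      ∃ x : K2 F, ∀ P, ¬(P = O ∨ Module.finrank k (res P) ≤ d - 1) →
        (y - T x) P = 0) := by
  have hn : 3 * t ≤ d - 1 := by omega
  refine ⟨fun x hx => hC.mem_Fsub_of_tame_eq_zero hT hO hn fun P _ _ => by rw [hx]; rfl,
    fun x hx P hP => hC.tame_eq_zero_of_mem_Fsub hT hx (not_le.1 (not_or.1 hP).2), ?_, fun y => ?_⟩
  · rintro _ hy ⟨x, rfl⟩
    exact ⟨x, hC.mem_Fsub_of_tame_eq_zero hT hO hn fun P hP hPn => hy P (by simp [hP, hPn]), rfl⟩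
  · obtain ⟨x, hx⟩ := hC.exists_tame_eq hT hO hn y
    exact ⟨x, fun P hP => hx P (not_or.1 hP).1 (not_le.1 (not_or.1 hP).2)⟩

end
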